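/- In a finite MDP with n states, d0 is boundedly always synchronizing in T if and only if both M^{σ_u}_i(T) > 0 for all i ≥ 0 and M^{σ_u}_i(E ∩ T) > 0 for all i ≥ 2^n, where σ_u is the uniform strategy and E is the union of all end-components. -/

import Mathlib

open scoped BigOperators
open Classical Filter

/-- A finite Markov decision process with real transition probabilities. -/
structure MDP (Q A : Type) [Fintype Q] [Fintype A] where
  δ : Q → A → Q → ℝ
  δ_nonneg : ∀ q a q', 0 ≤ δ q a q'
  δ_sum : ∀ q a, ∑ q', δ q a q' = 1

namespace MDP

variable {Q A : Type} [Fintype Q] [Fintype A]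

/-- `d` is a probability distribution. -/
def IsDist (d : Q → ℝ) : Prop := (∀ q, 0 ≤ d q) ∧ ∑ q, d q = 1

/-- A (randomized, history-dependent) strategy maps a history (list of past
state-action pairs) and the current state to a distribution over actions. -/
def IsStrategy (σ : List (Q × A) → Q → A → ℝ) : Prop :=
  (∀ h q a, 0 ≤ σ h q a) ∧ ∀ h q, ∑ a, σ h q a = 1

/-- The probability of the finite path `qs` (with actions `as`) of length `i`,
under strategy `σ` from initial distribution `d0`. -/
noncomputable def pathProb (M : MDP Q A) (σ : List (Q × A) → Q → A → ℝ)
    (d0 : Q → ℝ) (i : ℕ) (qs : Fin (i + 1) → Q) (as : Fin i → A) : ℝ :=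
  d0 (qs 0) * ∏ j : Fin i,
    (σ (List.ofFn (fun k : Fin j.val =>
          (qs ⟨k.val, by have := k.isLt; have := j.isLt; omega⟩,
           as ⟨k.val, by have := k.isLt; have := j.isLt; omega⟩)))
        (qs j.castSucc) (as j))
      * M.δ (qs j.castSucc) (as j) (qs j.succ)

/-- The distribution over states after `i` steps (`M^σ_i`). -/
noncomputable def stepDist (M : MDP Q A) (σ : List (Q × A) → Q → A → ℝ)
    (d0 : Q → ℝ) (i : ℕ) (q : Q) : ℝ :=
  ∑ qs : Fin (i + 1) → Q, ∑ as : Fin i → A,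
    if qs (Fin.last i) = q then M.pathProb σ d0 i qs as else 0

/-- The probability mass that a (sub)distribution assigns to a set `T`. -/
noncomputable def mass (d : Q → ℝ) (T : Set Q) : ℝ := ∑ q, T.indicator d q

/-- The support of a (sub)distribution. -/
def supp {α : Type} (d : α → ℝ) : Set α := {q | 0 < d q}

/-- One-step sure predecessors of `Y`. -/
def Pre (M : MDP Q A) (Y : Set Q) : Set Q :=
  {q | ∃ a, ∀ q', 0 < M.δ q a q' → q' ∈ Y}

/-- Probability of reaching `T` within `i` steps. -/
noncomputable def reachProb (M : MDP Q A) (σ : List (Q × A) → Q → A → ℝ)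
    (d0 : Q → ℝ) (T : Set Q) (i : ℕ) : ℝ :=
  ∑ qs : Fin (i + 1) → Q, ∑ as : Fin i → A,
    if ∃ j, qs j ∈ T then M.pathProb σ d0 i qs as else 0

/-- `d0` is almost-sure winning for the reachability objective `◇T`:
some strategy reaches `T` with probability one. -/
def ASReach (M : MDP Q A) (d0 : Q → ℝ) (T : Set Q) : Prop :=
  ∃ σ, IsStrategy σ ∧ (⨆ i : ℕ, M.reachProb σ d0 T i) = 1

/-- `d0` is limit-sure eventually synchronizing in `T`. -/
def LimitSureEventually (M : MDP Q A) (d0 : Q → ℝ) (T : Set Q) : Prop :=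
  ∀ ε > (0 : ℝ), ∃ σ, IsStrategy σ ∧ ∃ i, 1 - ε ≤ mass (M.stepDist σ d0 i) T

/-- `d0` is almost-sure weakly synchronizing in `T`. -/
def ASWeakly (M : MDP Q A) (d0 : Q → ℝ) (T : Set Q) : Prop :=
  ∃ σ, IsStrategy σ ∧ ∀ ε > (0 : ℝ), {i : ℕ | 1 - ε ≤ mass (M.stepDist σ d0 i) T}.Infinite

/-- `d0` is almost-sure strongly synchronizing in `T`. -/
def ASStrongly (M : MDP Q A) (d0 : Q → ℝ) (T : Set Q) : Prop :=
  ∃ σ, IsStrategy σ ∧ ∀ ε > (0 : ℝ), ∃ N, ∀ i ≥ N, 1 - ε ≤ mass (M.stepDist σ d0 i) T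

/-- The uniform distribution on a set `S`. -/
noncomputable def uniformOn (S : Set Q) : Q → ℝ :=
  fun q => if q ∈ S then 1 / (S.ncard : ℝ) else 0

/-- The uniform strategy, playing all actions uniformly at random. -/
noncomputable def uniformStrategy (Q A : Type) [Fintype A] :
    List (Q × A) → Q → A → ℝ :=
  fun _ _ _ => 1 / (Fintype.card A : ℝ)

/-- Action `a` is allowed in `q` w.r.t. `S` if all its successors stay in `S`. -/
def Allowed (M : MDP Q A) (S : Set Q) (q : Q) (a : A) : Prop :=
  ∀ q', 0 < M.δ q a q' → q' ∈ S

/-- Edge relation within `S` given the allowed actions. -/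
def ECEdge (M : MDP Q A) (S : Set Q) (q q' : Q) : Prop :=
  q ∈ S ∧ q' ∈ S ∧ ∃ a, M.Allowed S q a ∧ 0 < M.δ q a q'

/-- `S` is an end-component: closed and strongly connected via allowed actions. -/
def IsEC (M : MDP Q A) (S : Set Q) : Prop :=
  (∀ q ∈ S, ∃ a, M.Allowed S q a) ∧
  ∀ q ∈ S, ∀ q' ∈ S, Relation.ReflTransGen (M.ECEdge S) q q'

/-- The union of all end-components. -/
def ECUnion (M : MDP Q A) : Set Q := ⋃₀ {S | M.IsEC S}

/-- Positive always synchronizing in `T`. -/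
def PosAlways (M : MDP Q A) (d0 : Q → ℝ) (T : Set Q) : Prop :=
  ∃ σ, IsStrategy σ ∧ ∀ i, 0 < mass (M.stepDist σ d0 i) T

/-- Positive eventually synchronizing in `T`. -/
def PosEvent (M : MDP Q A) (d0 : Q → ℝ) (T : Set Q) : Prop :=
  ∃ σ, IsStrategy σ ∧ ∃ i, 0 < mass (M.stepDist σ d0 i) T

/-- Positive weakly synchronizing in `T`. -/
def PosWeakly (M : MDP Q A) (d0 : Q → ℝ) (T : Set Q) : Prop :=
  ∃ σ, IsStrategy σ ∧ ∀ N, ∃ i ≥ N, 0 < mass (M.stepDist σ d0 i) T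

/-- Positive strongly synchronizing in `T`. -/
def PosStrongly (M : MDP Q A) (d0 : Q → ℝ) (T : Set Q) : Prop :=
  ∃ σ, IsStrategy σ ∧ ∃ N, ∀ i ≥ N, 0 < mass (M.stepDist σ d0 i) T

/-- Bounded always synchronizing in `T`. -/
def BndAlways (M : MDP Q A) (d0 : Q → ℝ) (T : Set Q) : Prop :=
  ∃ σ, IsStrategy σ ∧ ∃ ε > (0 : ℝ), ∀ i, ε < mass (M.stepDist σ d0 i) T

/-- Bounded eventually synchronizing in `T`. -/
def BndEvent (M : MDP Q A) (d0 : Q → ℝ) (T : Set Q) : Prop :=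
  ∃ σ, IsStrategy σ ∧ ∃ ε > (0 : ℝ), ∃ i, ε < mass (M.stepDist σ d0 i) T

/-- Bounded weakly synchronizing in `T`. -/
def BndWeakly (M : MDP Q A) (d0 : Q → ℝ) (T : Set Q) : Prop :=
  ∃ σ, IsStrategy σ ∧ ∃ ε > (0 : ℝ), ∀ N, ∃ i ≥ N, ε < mass (M.stepDist σ d0 i) T

/-- Bounded strongly synchronizing in `T`. -/
def BndStrongly (M : MDP Q A) (d0 : Q → ℝ) (T : Set Q) : Prop :=
  ∃ σ, IsStrategy σ ∧ ∃ ε > (0 : ℝ), ∃ N, ∀ i ≥ N, ε < mass (M.stepDist σ d0 i) T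

end MDP

/-!
Let `E` be the union of the end-components. Outside `E` every action can lower the rank of a
well-chosen ranking of the states, so `β ^ rank` is, for small `β`, a bounded potential that grows
in expectation by a fixed fraction of itself at each step spent outside `E`. Hence under any
strategy the mass outside `E` is summable over time, and a strategy that keeps the mass of `T` above
`ε` eventually keeps positive mass in `E ∩ T`. The uniform strategy reaches every state that any
other strategy reaches, and the sequence of its supports, being the orbit of a self-map of the
`2 ^ n` subsets of `Q`, is periodic from step `2 ^ n` on; so it has positive mass in `E ∩ T` at
every such step.

Conversely, play uniformly for long enough, then inside `E` play uniformly among the actions that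
stay in an end-component. This makes the states of `E` recurrent for a finite Markov chain, in which
the positive entries of all powers, in rows of recurrent states, have a common positive lower bound.
Let `R` be a multiple of the periods of its states in `E`, and let the uniform phase be at least `R`
steps longer than the time from which the uniform strategy has positive mass in `E ∩ T`. Then every
later time can be moved back by a multiple of `R` into that phase, where `E ∩ T` has positive mass,
and the chain carries some of this mass back to `E ∩ T` at the original time.
-/

namespace MDP

open scoped Topology Matrix Nat

lemma exists_pos_forall_le_of_pos {ι : Type*} [Finite ι] (f : ι → ℝ) :
    ∃ c > 0, ∀ i, 0 < f i → c ≤ f i := by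
  have h : ∀ᶠ c in 𝓝[>] (0 : ℝ), ∀ i, 0 < f i → c ≤ f i :=
    eventually_all.2 fun i => eventually_imp_distrib_left.2 fun hi =>
      mem_of_superset (Ioc_mem_nhdsGT hi) fun _ hc => hc.2
  exact (eventually_mem_nhdsWithin.and h).exists

lemma iterate_mem_periodicPts {α : Type*} [Fintype α] (f : α → α) (x : α) {k : ℕ}
    (hk : Fintype.card α ≤ k) : f^[k] x ∈ Function.periodicPts f := by
  obtain ⟨i, j, hij, heq⟩ : ∃ i j : Fin (Fintype.card α + 1), i < j ∧ f^[i] x = f^[j] x := by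
    obtain ⟨i, j, hne, heq⟩ := Fintype.exists_ne_map_eq_of_card_lt
      (fun i : Fin (Fintype.card α + 1) => f^[i] x) (by simp)
    rcases hne.lt_or_gt with h | h
    exacts [⟨i, j, h, heq⟩, ⟨j, i, h, heq.symm⟩]
  have hperiodic : Function.IsPeriodicPt f (j - i) (f^[i] x) := by
    rw [Function.IsPeriodicPt, Function.IsFixedPt, ← Function.iterate_add_apply,
      Nat.sub_add_cancel hij.le, heq]
  rw [show k = k - i + i by omega, Function.iterate_add_apply]
  exact Function.mk_mem_periodicPts (Nat.sub_pos_of_lt hij) (hperiodic.apply_iterate _)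

lemma iterate_add_mul_factorial_card {α : Type*} [Fintype α] (f : α → α) (x : α) {k : ℕ}
    (hk : Fintype.card α ≤ k) (m : ℕ) : f^[k + m * (Fintype.card α)!] x = f^[k] x := by
  rw [add_comm, Function.iterate_add_apply]
  exact (Function.isPeriodicPt_factorial_card_of_mem_periodicPts
    (iterate_mem_periodicPts f x hk)).const_mul m

section NonnegMatrix

variable {Q : Type} [Fintype Q] {K L : Matrix Q Q ℝ} {v : Q → ℝ}

/-- The set of states reachable from `S` in one step of the Markov chain `K`, the action of `K` on
supports of distributions. -/
def supportImage (K : Matrix Q Q ℝ) (S : Set Q) : Set Q := {y | ∃ x ∈ S, 0 < K x y}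

lemma apply_mul_apply_le_vecMul (hv : ∀ x, 0 ≤ v x) (hK : ∀ x y, 0 ≤ K x y) (x y : Q) :
    v x * K x y ≤ (v ᵥ* K) y :=
  Finset.single_le_sum (fun x _ => mul_nonneg (hv x) (hK x y)) (Finset.mem_univ x)

lemma supp_vecMul (hv : ∀ x, 0 ≤ v x) (hK : ∀ x y, 0 ≤ K x y) :
    supp (v ᵥ* K) = supportImage K (supp v) := by
  ext y
  have hnonneg : ∀ x ∈ Finset.univ, 0 ≤ v x * K x y := fun x _ => mul_nonneg (hv x) (hK x y)
  simp only [supp, supportImage, Set.mem_ofPred_eq, Matrix.vecMul, dotProduct,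
    Finset.sum_pos_iff_of_nonneg hnonneg, Finset.mem_univ, true_and]
  refine exists_congr fun x => ⟨fun h => ?_, fun h => mul_pos h.1 h.2⟩
  exact ⟨pos_of_mul_pos_left h (hK x y), pos_of_mul_pos_right h (hv x)⟩

lemma mul_apply_pos_iff (hK : ∀ x y, 0 ≤ K x y) (hL : ∀ x y, 0 ≤ L x y) {x z : Q} :
    0 < (K * L) x z ↔ ∃ y, 0 < K x y ∧ 0 < L y z := by
  rw [Matrix.mul_apply_eq_vecMul]
  exact Set.ext_iff.1 (supp_vecMul (hK x) hL) z

lemma supp_vecMul_pow (hv : ∀ x, 0 ≤ v x) (hK : K ∈ Matrix.rowStochastic ℝ Q) (k : ℕ) :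
    supp (v ᵥ* K ^ k) = (supportImage K)^[k] (supp v) := by
  induction k with
  | zero => simp
  | succ k ih =>
    rw [pow_succ, ← Matrix.vecMul_vecMul, Function.iterate_succ_apply', ← ih]
    exact supp_vecMul (Matrix.nonneg_vecMul_of_mem_rowStochastic (pow_mem hK k) hv) hK.1

/-- An exponent `R` such that `K ^ R` has the same support as `K ^ (m * R)` for all `m ≠ 0` and all
stochastic `K`. With `n` states there are `2 ^ n` supports, so `(2 ^ n)!` is a multiple of all their
periods under `K`, and is at least the preperiod `2 ^ n`. -/
def idempotentExponent (Q : Type) [Fintype Q] : ℕ := (2 ^ Fintype.card Q)!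

lemma idempotentExponent_pos : 0 < idempotentExponent Q := Nat.factorial_pos _

lemma supp_vecMul_pow_add_mul_idempotentExponent (hv : ∀ x, 0 ≤ v x)
    (hK : K ∈ Matrix.rowStochastic ℝ Q) {k : ℕ} (hk : 2 ^ Fintype.card Q ≤ k) (m : ℕ) :
    supp (v ᵥ* K ^ (k + m * idempotentExponent Q)) = supp (v ᵥ* K ^ k) := by
  rw [supp_vecMul_pow hv hK, supp_vecMul_pow hv hK, idempotentExponent, ← Fintype.card_set]
  exact iterate_add_mul_factorial_card _ _ (by rwa [Fintype.card_set]) m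

end NonnegMatrix

section Recurrence

variable {Q : Type} [Fintype Q] {K : Matrix Q Q ℝ} {x y z : Q} {k l : ℕ}

lemma pow_add_apply_pos (hK : K ∈ Matrix.rowStochastic ℝ Q) (hxy : 0 < (K ^ k) x y)
    (hyz : 0 < (K ^ l) y z) : 0 < (K ^ (k + l)) x z := by
  rw [pow_add]
  exact (mul_apply_pos_iff (pow_mem hK k).1 (pow_mem hK l).1).2 ⟨y, hxy, hyz⟩

lemma exists_pos_of_pow_add_apply_pos (hK : K ∈ Matrix.rowStochastic ℝ Q)
    (h : 0 < (K ^ (k + l)) x z) : ∃ y, 0 < (K ^ k) x y ∧ 0 < (K ^ l) y z := by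
  rw [pow_add] at h
  exact (mul_apply_pos_iff (pow_mem hK k).1 (pow_mem hK l).1).1 h

lemma pow_mul_apply_self_pos (hK : K ∈ Matrix.rowStochastic ℝ Q) (h : 0 < (K ^ k) x x) (m : ℕ) :
    0 < (K ^ (m * k)) x x := by
  induction m with
  | zero => simp
  | succ m ih =>
    rw [Nat.succ_mul]
    exact pow_add_apply_pos hK ih h

lemma pow_idempotentExponent_apply_pos (hK : K ∈ Matrix.rowStochastic ℝ Q) {m : ℕ} (hm : m ≠ 0)
    (h : 0 < (K ^ (m * idempotentExponent Q)) x y) : 0 < (K ^ idempotentExponent Q) x y := by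
  obtain ⟨j, rfl⟩ := Nat.exists_eq_succ_of_ne_zero hm
  have hsingle : 0 ≤ (Pi.single x 1 : Q → ℝ) := Pi.single_nonneg.2 zero_le_one
  have hsupp :=
    supp_vecMul_pow_add_mul_idempotentExponent hsingle hK (Nat.self_le_factorial _) j
  simp only [Matrix.single_one_vecMul] at hsupp
  rw [Nat.succ_mul, add_comm] at h
  exact (Set.ext_iff.1 hsupp y).1 h

/-- Recurrence of the state `x` of the Markov chain `K`, in the form appropriate to finite chains:
every state reachable from `x` leads back to `x`. -/
def IsRecurrent (K : Matrix Q Q ℝ) (x : Q) : Prop :=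
  ∀ k y, 0 < (K ^ k) x y → ∃ l, 0 < (K ^ l) y x

lemma IsRecurrent.pow_idempotentExponent_apply_self_pos (hK : K ∈ Matrix.rowStochastic ℝ Q)
    (hx : IsRecurrent K x) : 0 < (K ^ idempotentExponent Q) x x := by
  obtain ⟨y, hxy⟩ : ∃ y, 0 < (K ^ 1) x y := by
    by_contra! h
    have hrow := Matrix.sum_row_of_mem_rowStochastic (pow_mem hK 1) x
    linarith [Finset.sum_nonpos fun y (_ : y ∈ Finset.univ) => h y]
  obtain ⟨l, hyx⟩ := hx 1 y hxy
  refine pow_idempotentExponent_apply_pos hK (m := 1 + l) (by omega) ?_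
  rw [mul_comm]
  exact pow_mul_apply_self_pos hK (pow_add_apply_pos hK hxy hyx) _

-- Let `R` be the exponent. The loop `z → x → z` has length `l + k` and the walk `z → x → y` has
-- length `l + k + R`: going round the loop `R - 1` times first makes the total a multiple of `R`.
lemma IsRecurrent.pow_idempotentExponent_apply_pos (hK : K ∈ Matrix.rowStochastic ℝ Q)
    (hx : IsRecurrent K x) (hxz : 0 < (K ^ k) x z)
    (hxy : 0 < (K ^ (k + idempotentExponent Q)) x y) : 0 < (K ^ idempotentExponent Q) z y := by
  obtain ⟨l, hzx⟩ := hx k z hxz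
  obtain ⟨r, hr⟩ := Nat.exists_eq_add_one_of_ne_zero (idempotentExponent_pos (Q := Q)).ne'
  have hloop := pow_mul_apply_self_pos hK (pow_add_apply_pos hK hzx hxz) r
  have hzy := pow_add_apply_pos hK hloop (pow_add_apply_pos hK hzx hxy)
  refine MDP.pow_idempotentExponent_apply_pos hK (m := l + k + 1) (by omega) ?_
  convert hzy using 3
  rw [hr]
  ring

lemma exists_pos_le_pow_apply_of_isRecurrent (hK : K ∈ Matrix.rowStochastic ℝ Q) :
    ∃ c > 0, ∀ x, IsRecurrent K x → ∀ k y, 0 < (K ^ k) x y → c ≤ (K ^ k) x y := by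
  set R := idempotentExponent Q
  obtain ⟨c, hc, hle⟩ := exists_pos_forall_le_of_pos
    fun t : Fin (R + 1) × Q × Q => (K ^ (t.1 : ℕ)) t.2.1 t.2.2
  refine ⟨c, hc, fun x hx k y hxy => ?_⟩
  rcases lt_or_ge k R with hk | hk
  · exact hle (⟨k, by omega⟩, x, y) hxy
  obtain ⟨j, rfl⟩ := Nat.exists_eq_add_of_le' hk
  calc c = ∑ z, (K ^ j) x z * c := by
        rw [← Finset.sum_mul, Matrix.sum_row_of_mem_rowStochastic (pow_mem hK j), one_mul]
    _ ≤ ∑ z, (K ^ j) x z * (K ^ R) z y := by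
        refine Finset.sum_le_sum fun z _ => ?_
        rcases (Matrix.nonneg_of_mem_rowStochastic (pow_mem hK j) : 0 ≤ (K ^ j) x z).eq_or_lt
          with hz | hz
        · simp [← hz]
        · exact mul_le_mul_of_nonneg_left
            (hle (Fin.last R, z, y) (hx.pow_idempotentExponent_apply_pos hK hz hxy)) hz.le
    _ = (K ^ (j + R)) x y := by rw [pow_add, Matrix.mul_apply]

end Recurrence

section StepDist

variable {Q A : Type} [Fintype Q] [Fintype A] (M : MDP Q A)
  {σ σ' : List (Q × A) → Q → A → ℝ} {d0 : Q → ℝ}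

/-- The history of a path, in the form in which it is passed to a strategy: the list of the
state-action pairs of the path, without its last state. -/
def history {i : ℕ} (qs : Fin (i + 1) → Q) (as : Fin i → A) : List (Q × A) :=
  List.ofFn fun k => (qs k.castSucc, as k)

lemma pathProb_succ (σ : List (Q × A) → Q → A → ℝ) (d0 : Q → ℝ) (i : ℕ)
    (qs : Fin (i + 2) → Q) (as : Fin (i + 1) → A) :
    M.pathProb σ d0 (i + 1) qs as =
      M.pathProb σ d0 i (fun k => qs k.castSucc) (fun k => as k.castSucc) *
        (σ (history (fun k => qs k.castSucc) fun k => as k.castSucc)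
            (qs (Fin.last i).castSucc) (as (Fin.last i)) *
          M.δ (qs (Fin.last i).castSucc) (as (Fin.last i)) (qs (Fin.last (i + 1)))) := by
  rw [pathProb, Fin.prod_univ_castSucc, ← mul_assoc]
  rfl

lemma pathProb_nonneg (hσ : IsStrategy σ) (hd0 : IsDist d0) {i : ℕ} (qs : Fin (i + 1) → Q)
    (as : Fin i → A) : 0 ≤ M.pathProb σ d0 i qs as :=
  mul_nonneg (hd0.1 _) (Finset.prod_nonneg fun _ _ => mul_nonneg (hσ.1 _ _ _) (M.δ_nonneg _ _ _))

lemma pathProb_congr {i : ℕ} (h : ∀ l : List (Q × A), l.length < i → σ l = σ' l)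
    (qs : Fin (i + 1) → Q) (as : Fin i → A) :
    M.pathProb σ d0 i qs as = M.pathProb σ' d0 i qs as := by
  refine congrArg (d0 (qs 0) * ·) (Finset.prod_congr rfl fun j _ => ?_)
  rw [h _ (by simp)]

lemma stepDist_congr {i : ℕ} (h : ∀ l : List (Q × A), l.length < i → σ l = σ' l) :
    M.stepDist σ d0 i = M.stepDist σ' d0 i := by
  ext q
  simp only [stepDist, M.pathProb_congr h]

lemma sum_paths_succ {i : ℕ} (F : (Fin (i + 2) → Q) → (Fin (i + 1) → A) → ℝ) :
    ∑ qs, ∑ as, F qs as = ∑ q' : Q, ∑ a : A, ∑ qs : Fin (i + 1) → Q, ∑ as : Fin i → A,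
      F (Fin.snoc (α := fun _ => Q) qs q') (Fin.snoc (α := fun _ => A) as a) := by
  rw [← Equiv.sum_comp (Fin.snocEquiv fun _ : Fin (i + 2) => Q), Fintype.sum_prod_type]
  refine Finset.sum_congr rfl fun q' _ => ?_
  symm
  rw [Finset.sum_comm]
  refine Finset.sum_congr rfl fun qs _ => ?_
  rw [← Equiv.sum_comp (Fin.snocEquiv fun _ : Fin (i + 1) => A), Fintype.sum_prod_type]
  rfl

/-- The joint distribution of the state and of the action played at step `i`. -/
noncomputable def stepActionDist (σ : List (Q × A) → Q → A → ℝ) (d0 : Q → ℝ) (i : ℕ)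
    (q : Q) (a : A) : ℝ :=
  ∑ qs : Fin (i + 1) → Q, ∑ as : Fin i → A,
    if qs (Fin.last i) = q then M.pathProb σ d0 i qs as * σ (history qs as) q a else 0

lemma stepActionDist_nonneg (hσ : IsStrategy σ) (hd0 : IsDist d0) (i : ℕ) (q : Q) (a : A) :
    0 ≤ M.stepActionDist σ d0 i q a :=
  Finset.sum_nonneg fun _ _ => Finset.sum_nonneg fun _ _ =>
    ite_nonneg (mul_nonneg (M.pathProb_nonneg hσ hd0 _ _) (hσ.1 _ _ _)) le_rfl

lemma sum_stepActionDist (hσ : IsStrategy σ) (d0 : Q → ℝ) (i : ℕ) (q : Q) :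
    ∑ a, M.stepActionDist σ d0 i q a = M.stepDist σ d0 i q := by
  unfold stepActionDist stepDist
  rw [Finset.sum_comm]
  refine Finset.sum_congr rfl fun qs _ => ?_
  rw [Finset.sum_comm]
  refine Finset.sum_congr rfl fun as _ => ?_
  split_ifs
  · rw [← Finset.mul_sum, hσ.2, mul_one]
  · exact Finset.sum_const_zero

lemma stepActionDist_markov (s : ℕ → Q → A → ℝ) (d0 : Q → ℝ) (i : ℕ) (q : Q) (a : A) :
    M.stepActionDist (fun h => s h.length) d0 i q a =
      M.stepDist (fun h => s h.length) d0 i q * s i q a := by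
  simp only [stepActionDist, stepDist, history, List.length_ofFn, Finset.sum_mul, ite_mul,
    zero_mul]

lemma sum_stepActionDist_mul (i : ℕ) (f : Q → A → ℝ) :
    ∑ q, ∑ a, M.stepActionDist σ d0 i q a * f q a =
      ∑ a, ∑ qs : Fin (i + 1) → Q, ∑ as : Fin i → A, M.pathProb σ d0 i qs as *
        (σ (history qs as) (qs (Fin.last i)) a * f (qs (Fin.last i)) a) := by
  simp only [stepActionDist, Finset.sum_mul, ite_mul, zero_mul]
  rw [Finset.sum_comm]
  refine Finset.sum_congr rfl fun a _ => ?_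
  rw [Finset.sum_comm]
  refine Finset.sum_congr rfl fun qs _ => ?_
  rw [Finset.sum_comm]
  refine Finset.sum_congr rfl fun as _ => ?_
  simp only [Finset.sum_ite_eq, Finset.mem_univ, if_true, mul_assoc]

lemma stepDist_zero (σ : List (Q × A) → Q → A → ℝ) (d0 : Q → ℝ) : M.stepDist σ d0 0 = d0 := by
  ext q
  unfold stepDist pathProb
  rw [← Equiv.sum_comp (Equiv.funUnique (Fin 1) Q).symm]
  simp

lemma stepDist_succ (σ : List (Q × A) → Q → A → ℝ) (d0 : Q → ℝ) (i : ℕ) (q' : Q) :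
    M.stepDist σ d0 (i + 1) q' = ∑ q, ∑ a, M.stepActionDist σ d0 i q a * M.δ q a q' := by
  rw [sum_stepActionDist_mul, stepDist, sum_paths_succ]
  simp only [pathProb_succ, Fin.snoc_last, Fin.snoc_castSucc]
  rw [Finset.sum_eq_single q' (fun _ _ h => by simp [h]) (by simp)]
  simp

lemma stepDist_nonneg (hσ : IsStrategy σ) (hd0 : IsDist d0) (i : ℕ) (q : Q) :
    0 ≤ M.stepDist σ d0 i q :=
  Finset.sum_nonneg fun _ _ => Finset.sum_nonneg fun _ _ =>
    ite_nonneg (M.pathProb_nonneg hσ hd0 _ _) le_rfl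

end StepDist

section TransitionMatrix

variable {Q A : Type} [Fintype Q] [Fintype A] (M : MDP Q A)

/-- The transition matrix of the Markov chain induced on the states by the memoryless decision
rule `s`. -/
noncomputable def transitionMatrix (s : Q → A → ℝ) : Matrix Q Q ℝ :=
  Matrix.of fun q q' => ∑ a, s q a * M.δ q a q'

variable {s : Q → A → ℝ}

lemma transitionMatrix_mem_rowStochastic (hs : ∀ q, IsDist (s q)) :
    M.transitionMatrix s ∈ Matrix.rowStochastic ℝ Q := by
  refine Matrix.mem_rowStochastic_iff_sum.2 ⟨fun q q' => ?_, fun q => ?_⟩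
  · exact Finset.sum_nonneg fun a _ => mul_nonneg ((hs q).1 a) (M.δ_nonneg q a q')
  · simp only [transitionMatrix, Matrix.of_apply]
    rw [Finset.sum_comm]
    simp only [← Finset.mul_sum, M.δ_sum, mul_one, (hs q).2]

lemma transitionMatrix_apply_pos_iff (hs : ∀ q, IsDist (s q)) {q q' : Q} :
    0 < M.transitionMatrix s q q' ↔ ∃ a, 0 < s q a ∧ 0 < M.δ q a q' := by
  have hnonneg (a : A) (_ : a ∈ Finset.univ) : 0 ≤ s q a * M.δ q a q' :=
    mul_nonneg ((hs q).1 a) (M.δ_nonneg q a q')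
  simp only [transitionMatrix, Matrix.of_apply, Finset.sum_pos_iff_of_nonneg hnonneg,
    Finset.mem_univ, true_and]
  refine exists_congr fun a => ⟨fun h => ?_, fun h => mul_pos h.1 h.2⟩
  exact ⟨pos_of_mul_pos_left h (M.δ_nonneg q a q'), pos_of_mul_pos_right h ((hs q).1 a)⟩

lemma isDist_vecMul {d : Q → ℝ} {K : Matrix Q Q ℝ} (hd : IsDist d)
    (hK : K ∈ Matrix.rowStochastic ℝ Q) : IsDist (d ᵥ* K) := by
  refine ⟨Matrix.nonneg_vecMul_of_mem_rowStochastic hK hd.1, ?_⟩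
  rw [← dotProduct_one]
  exact Matrix.vecMul_dotProduct_one_eq_one_rowStochastic hK (by rw [dotProduct_one, hd.2])

variable {σ : List (Q × A) → Q → A → ℝ} {d0 : Q → ℝ} {i : ℕ}

lemma stepDist_succ_eq_vecMul
    (h : ∀ q a, M.stepActionDist σ d0 i q a = M.stepDist σ d0 i q * s q a) :
    M.stepDist σ d0 (i + 1) = M.stepDist σ d0 i ᵥ* M.transitionMatrix s := by
  ext q'
  simp only [stepDist_succ, h, Matrix.vecMul, dotProduct, transitionMatrix, Matrix.of_apply,
    Finset.mul_sum, mul_assoc]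

lemma exists_stepDist_succ_eq_vecMul (hσ : IsStrategy σ) (hd0 : IsDist d0) (i : ℕ) :
    ∃ s : Q → A → ℝ, (∀ q, IsDist (s q)) ∧
      M.stepDist σ d0 (i + 1) = M.stepDist σ d0 i ᵥ* M.transitionMatrix s := by
  have hD := M.stepDist_nonneg hσ hd0 i
  have hJ := M.stepActionDist_nonneg hσ hd0 i
  refine ⟨fun q => if M.stepDist σ d0 i q = 0 then σ [] q else
    fun a => M.stepActionDist σ d0 i q a / M.stepDist σ d0 i q, fun q => ?_,
    M.stepDist_succ_eq_vecMul fun q a => ?_⟩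
  · dsimp only
    split_ifs with h
    · exact ⟨hσ.1 [] q, hσ.2 [] q⟩
    · refine ⟨fun a => div_nonneg (hJ q a) (hD q), ?_⟩
      rw [← Finset.sum_div, M.sum_stepActionDist hσ, div_self h]
  · have hle : M.stepActionDist σ d0 i q a ≤ M.stepDist σ d0 i q := by
      rw [← M.sum_stepActionDist hσ]
      exact Finset.single_le_sum (fun a _ => hJ q a) (Finset.mem_univ a)
    split_ifs with h
    · rw [h, zero_mul]
      exact le_antisymm (h ▸ hle) (hJ q a)
    · rw [mul_div_cancel₀ _ h]

lemma isDist_stepDist (hσ : IsStrategy σ) (hd0 : IsDist d0) (i : ℕ) :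
    IsDist (M.stepDist σ d0 i) := by
  induction i with
  | zero => rwa [stepDist_zero]
  | succ i ih =>
    obtain ⟨s, hs, hstep⟩ := M.exists_stepDist_succ_eq_vecMul hσ hd0 i
    rw [hstep]
    exact isDist_vecMul ih (M.transitionMatrix_mem_rowStochastic hs)

lemma stepDist_markov_succ (s : ℕ → Q → A → ℝ) (d0 : Q → ℝ) (i : ℕ) :
    M.stepDist (fun h => s h.length) d0 (i + 1) =
      M.stepDist (fun h => s h.length) d0 i ᵥ* M.transitionMatrix (s i) :=
  M.stepDist_succ_eq_vecMul (M.stepActionDist_markov s d0 i)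

lemma stepDist_markov_add {s : ℕ → Q → A → ℝ} {g : Q → A → ℝ} {N : ℕ} (hs : ∀ i ≥ N, s i = g)
    (d0 : Q → ℝ) (k : ℕ) :
    M.stepDist (fun h => s h.length) d0 (N + k) =
      M.stepDist (fun h => s h.length) d0 N ᵥ* M.transitionMatrix g ^ k := by
  induction k with
  | zero => simp
  | succ k ih =>
    rw [← add_assoc, stepDist_markov_succ, ih, hs _ (Nat.le_add_right N k), pow_succ,
      Matrix.vecMul_vecMul]

end TransitionMatrix

section Mass

variable {Q : Type} [Fintype Q] {d : Q → ℝ} {S : Set Q}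

lemma mass_pos_iff (hd : ∀ q, 0 ≤ d q) : 0 < mass d S ↔ (supp d ∩ S).Nonempty := by
  have hnonneg (q : Q) (_ : q ∈ Finset.univ) : 0 ≤ S.indicator d q :=
    Set.indicator_nonneg (fun q _ => hd q) q
  simp only [mass, Finset.sum_pos_iff_of_nonneg hnonneg, Finset.mem_univ, true_and]
  refine exists_congr fun q => ?_
  by_cases hq : q ∈ S <;> simp [hq, supp]

lemma le_mass (hd : ∀ q, 0 ≤ d q) {q : Q} (hq : q ∈ S) : d q ≤ mass d S := by
  rw [← Set.indicator_of_mem hq d]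
  exact Finset.single_le_sum (fun q _ => Set.indicator_nonneg (fun q _ => hd q) q)
    (Finset.mem_univ q)

lemma mass_le_mass_inter_add_mass_compl (hd : ∀ q, 0 ≤ d q) (E : Set Q) :
    mass d S ≤ mass d (E ∩ S) + mass d Eᶜ := by
  simp only [mass, ← Finset.sum_add_distrib]
  refine Finset.sum_le_sum fun q _ => ?_
  by_cases hE : q ∈ E <;> by_cases hS : q ∈ S <;> simp [hE, hS, hd q]

lemma mul_mass_le_dotProduct_indicator (hd : ∀ q, 0 ≤ d q) {U : Q → ℝ} {c : ℝ}
    (hU : ∀ q, c ≤ U q) : c * mass d S ≤ d ⬝ᵥ S.indicator U := by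
  rw [mass, Finset.mul_sum]
  refine Finset.sum_le_sum fun q _ => ?_
  by_cases hq : q ∈ S
  · simpa [hq, mul_comm] using mul_le_mul_of_nonneg_left (hU q) (hd q)
  · simp [hq]

end Mass

section Uniform

lemma isDist_const_one_div_card {α : Type} [Fintype α] [Nonempty α] :
    IsDist fun _ : α => 1 / (Fintype.card α : ℝ) :=
  ⟨fun _ => by positivity, by simp⟩

lemma isStrategy_uniformStrategy {Q A : Type} [Fintype A] [Nonempty A] :
    IsStrategy (uniformStrategy Q A) :=
  ⟨fun _ _ => isDist_const_one_div_card.1, fun _ _ => isDist_const_one_div_card.2⟩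

variable {Q A : Type} [Fintype Q] [Fintype A]

/-- The transition matrix of the Markov chain on the states induced by the uniform strategy. -/
noncomputable def uniformMatrix (M : MDP Q A) : Matrix Q Q ℝ :=
  M.transitionMatrix fun _ _ => 1 / (Fintype.card A : ℝ)

variable (M : MDP Q A) {d0 : Q → ℝ}

lemma stepDist_uniformStrategy_succ (d0 : Q → ℝ) (i : ℕ) :
    M.stepDist (uniformStrategy Q A) d0 (i + 1) =
      M.stepDist (uniformStrategy Q A) d0 i ᵥ* M.uniformMatrix :=
  M.stepDist_markov_succ (fun _ _ _ => 1 / (Fintype.card A : ℝ)) d0 i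

lemma stepDist_uniformStrategy (d0 : Q → ℝ) (i : ℕ) :
    M.stepDist (uniformStrategy Q A) d0 i = d0 ᵥ* M.uniformMatrix ^ i := by
  induction i with
  | zero => simp [stepDist_zero]
  | succ i ih => rw [stepDist_uniformStrategy_succ, ih, pow_succ, Matrix.vecMul_vecMul]

variable [Nonempty A]

lemma uniformMatrix_mem_rowStochastic : M.uniformMatrix ∈ Matrix.rowStochastic ℝ Q :=
  M.transitionMatrix_mem_rowStochastic fun _ => isDist_const_one_div_card

lemma uniformMatrix_apply_pos {q q' : Q} {a : A} (h : 0 < M.δ q a q') :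
    0 < M.uniformMatrix q q' :=
  (M.transitionMatrix_apply_pos_iff fun _ => isDist_const_one_div_card).2 ⟨a, by positivity, h⟩

lemma supp_stepDist_subset_uniformStrategy {σ : List (Q × A) → Q → A → ℝ} (hσ : IsStrategy σ)
    (hd0 : IsDist d0) (i : ℕ) :
    supp (M.stepDist σ d0 i) ⊆ supp (M.stepDist (uniformStrategy Q A) d0 i) := by
  induction i with
  | zero => simp only [stepDist_zero, subset_rfl]
  | succ i ih =>
    obtain ⟨s, hs, hstep⟩ := M.exists_stepDist_succ_eq_vecMul hσ hd0 i
    rw [hstep, stepDist_uniformStrategy_succ,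
      supp_vecMul (M.stepDist_nonneg hσ hd0 i) (M.transitionMatrix_mem_rowStochastic hs).1,
      supp_vecMul (M.stepDist_nonneg isStrategy_uniformStrategy hd0 i)
        M.uniformMatrix_mem_rowStochastic.1]
    rintro q' ⟨q, hq, hqq'⟩
    obtain ⟨a, -, ha⟩ := (M.transitionMatrix_apply_pos_iff hs).1 hqq'
    exact ⟨q, ih hq, M.uniformMatrix_apply_pos ha⟩

lemma supp_stepDist_uniformStrategy_add_mul_idempotentExponent (hd0 : IsDist d0) {i : ℕ}
    (hi : 2 ^ Fintype.card Q ≤ i) (m : ℕ) :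
    supp (M.stepDist (uniformStrategy Q A) d0 (i + m * idempotentExponent Q)) =
      supp (M.stepDist (uniformStrategy Q A) d0 i) := by
  rw [stepDist_uniformStrategy, stepDist_uniformStrategy]
  exact supp_vecMul_pow_add_mul_idempotentExponent hd0.1 M.uniformMatrix_mem_rowStochastic hi m

end Uniform

section Transience

variable {Q A : Type} [Fintype Q] [Fintype A] (M : MDP Q A)

/-- `S` is a trap of the sub-MDP `X`: no action that stays in `X` can leave `S`. -/
def IsTrap (X S : Set Q) : Prop :=
  S.Nonempty ∧ S ⊆ X ∧ ∀ q ∈ S, ∀ a, M.Allowed X q a → M.Allowed S q a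

variable {M}

lemma isEC_of_minimal_isTrap {X S : Set Q} (hS : Minimal (M.IsTrap X) S)
    (hact : ∀ q ∈ S, ∃ a, M.Allowed X q a) : M.IsEC S := by
  obtain ⟨⟨-, hSX, hclosed⟩, hmin⟩ := hS
  refine ⟨fun q hq => (hact q hq).imp (hclosed q hq), fun q hq => ?_⟩
  have htrap : M.IsTrap X {x ∈ S | Relation.ReflTransGen (M.ECEdge S) q x} := by
    refine ⟨⟨q, hq, .refl⟩, fun x hx => hSX hx.1, fun x hx a ha y hy => ?_⟩
    have hyS := hclosed x hx.1 a ha y hy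
    exact ⟨hyS, hx.2.tail ⟨hx.1, hyS, a, hclosed x hx.1 a ha, hy⟩⟩
  exact fun q' hq' => (hmin htrap (fun _ hx => hx.1) hq').2

variable (M)

lemma exists_enters_or_stays {Y : Set Q} (hY : Y ≠ Set.univ) :
    ∃ S : Set Q, S.Nonempty ∧ Disjoint S Y ∧ ∀ q ∈ S, ∀ a,
      (∃ q' ∈ Y, 0 < M.δ q a q') ∨ q ∈ M.ECUnion ∧ M.Allowed S q a := by
  have hcompl : M.IsTrap Yᶜ Yᶜ :=
    ⟨Set.nonempty_compl.2 hY, subset_rfl, fun _ _ _ h => h⟩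
  obtain ⟨S, hS⟩ := exists_minimal_of_wellFoundedLT (M.IsTrap Yᶜ) ⟨_, hcompl⟩
  have henters {q : Q} {a : A} (h : ¬ M.Allowed Yᶜ q a) : ∃ q' ∈ Y, 0 < M.δ q a q' := by
    simpa [Allowed, and_comm] using h
  by_cases hact : ∀ q ∈ S, ∃ a, M.Allowed Yᶜ q a
  · refine ⟨S, hS.1.1, Set.disjoint_left.2 hS.1.2.1, fun q hq a => ?_⟩
    by_cases ha : M.Allowed Yᶜ q a
    · exact .inr ⟨⟨S, isEC_of_minimal_isTrap hS hact, hq⟩, hS.1.2.2 q hq a ha⟩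
    · exact .inl (henters ha)
  · push Not at hact
    obtain ⟨q, hq, hno⟩ := hact
    refine ⟨{q}, Set.singleton_nonempty q, Set.disjoint_singleton_left.2 (hS.1.2.1 hq), ?_⟩
    rintro _ rfl a
    exact .inl (henters (hno a))

-- Well-founded induction from `Set.univ` down to `Y`: the next target is `Y ∪ S`, with `S` as in
-- `exists_enters_or_stays`, and the states of `S` get rank `1`.
lemma exists_rank_of_target (Y : Set Q) :
    ∃ r : Q → ℕ, (∀ q, r q = 0 ↔ q ∈ Y) ∧ ∀ q ∉ Y, ∀ a,
      (∃ q', 0 < M.δ q a q' ∧ r q' < r q) ∨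
        q ∈ M.ECUnion ∧ ∀ q', 0 < M.δ q a q' → r q' = r q := by
  induction Y using WellFoundedGT.induction with
  | ind Y ih =>
    rcases eq_or_ne Y Set.univ with rfl | hY
    · exact ⟨0, by simp⟩
    obtain ⟨S, hSne, hSY, hS⟩ := M.exists_enters_or_stays hY
    have hlt : Y < Y ∪ S := by
      obtain ⟨q, hq⟩ := hSne
      exact Set.ssubset_iff_subset_ne.2 ⟨Set.subset_union_left, fun h =>
        Set.disjoint_left.1 hSY hq (h ▸ Or.inr hq)⟩
    obtain ⟨r, hr0, hr⟩ := ih (Y ∪ S) hlt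
    refine ⟨fun q => if q ∈ Y then 0 else r q + 1, fun q => by simp, fun q hqY a => ?_⟩
    simp only [hqY, if_false]
    by_cases hqS : q ∈ S
    · have hrS {x : Q} (hx : x ∈ S) : r x = 0 := (hr0 x).2 (.inr hx)
      refine (hS q hqS a).imp (fun ⟨q', hq', hδ⟩ => ⟨q', hδ, by simp [hq']⟩) fun h =>
        ⟨h.1, fun q' hδ => ?_⟩
      have hq' := h.2 q' hδ
      simp [Set.disjoint_left.1 hSY hq', hrS hq', hrS hqS]
    · have hq : q ∉ Y ∪ S := by simp [hqY, hqS]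
      rcases hr q hq a with ⟨q', hδ, hlt⟩ | ⟨hqE, heq⟩
      · exact .inl ⟨q', hδ, by split_ifs <;> omega⟩
      · refine .inr ⟨hqE, fun q' hδ => ?_⟩
        have hq' : q' ∉ Y ∪ S := fun h => hq ((hr0 q).1 (heq q' hδ ▸ (hr0 q').2 h))
        rw [if_neg fun h => hq' (.inl h), heq q' hδ]

-- With `r` the rank towards `∅`, the potential is `β ^ r` for a small `β`: an action that can lower
-- the rank at least doubles it in expectation, and outside `ECUnion` every action is of this kind.
lemma exists_potential :
    ∃ U : Q → ℝ, (∀ q, 0 < U q) ∧ (∀ q, U q ≤ 1) ∧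
      ∀ q a, U q + M.ECUnionᶜ.indicator U q ≤ ∑ q', M.δ q a q' * U q' := by
  obtain ⟨r, -, hr⟩ := M.exists_rank_of_target ∅
  obtain ⟨p, hp, hle⟩ := exists_pos_forall_le_of_pos fun t : Q × A × Q => M.δ t.1 t.2.1 t.2.2
  obtain ⟨β, hβ, hβ1, hβp⟩ : ∃ β : ℝ, 0 < β ∧ β ≤ 1 ∧ 2 * β ≤ p :=
    ⟨min p 1 / 2, by positivity, by linarith [min_le_right p 1], by linarith [min_le_left p 1]⟩
  have hU (q : Q) : 0 < β ^ r q := pow_pos hβ _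
  refine ⟨fun q => β ^ r q, hU, fun q => pow_le_one₀ hβ.le hβ1, fun q a => ?_⟩
  have hnonneg (q' : Q) : 0 ≤ M.δ q a q' * β ^ r q' := mul_nonneg (M.δ_nonneg _ _ _) (hU q').le
  rcases hr q (Set.notMem_empty q) a with ⟨q', hδ, hlt⟩ | ⟨hq, heq⟩
  · calc β ^ r q + M.ECUnionᶜ.indicator (fun q => β ^ r q) q
        ≤ β ^ r q + β ^ r q := by
          gcongr
          exact Set.indicator_apply_le' (fun _ => le_rfl) fun _ => (hU q).le
      _ ≤ 2 * β * β ^ r q' := by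
          rw [← two_mul, mul_assoc, ← pow_succ']
          gcongr 2 * ?_
          exact pow_le_pow_of_le_one hβ.le hβ1 hlt
      _ ≤ M.δ q a q' * β ^ r q' := by
          gcongr
          exact hβp.trans (hle (q, a, q') hδ)
      _ ≤ ∑ q', M.δ q a q' * β ^ r q' :=
          Finset.single_le_sum (fun q' _ => hnonneg q') (Finset.mem_univ q')
  · rw [Set.indicator_of_notMem (Set.notMem_compl_iff.2 hq), add_zero]
    refine le_of_eq ?_
    calc β ^ r q = ∑ q', M.δ q a q' * β ^ r q := by rw [← Finset.sum_mul, M.δ_sum, one_mul]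
      _ = ∑ q', M.δ q a q' * β ^ r q' := Finset.sum_congr rfl fun q' _ => by
          rcases (M.δ_nonneg q a q').eq_or_lt with h | h
          · simp [← h]
          · rw [heq q' h]

lemma le_transitionMatrix_mulVec {s : Q → A → ℝ} (hs : ∀ q, IsDist (s q)) {U V : Q → ℝ}
    (h : ∀ q a, V q ≤ ∑ q', M.δ q a q' * U q') : V ≤ M.transitionMatrix s *ᵥ U := by
  intro q
  calc V q = ∑ a, s q a * V q := by rw [← Finset.sum_mul, (hs q).2, one_mul]
    _ ≤ ∑ a, s q a * ∑ q', M.δ q a q' * U q' :=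
        Finset.sum_le_sum fun a _ => mul_le_mul_of_nonneg_left (h q a) ((hs q).1 a)
    _ = (M.transitionMatrix s *ᵥ U) q := by
        simp only [Matrix.mulVec, dotProduct, transitionMatrix, Matrix.of_apply, Finset.sum_mul,
          Finset.mul_sum, mul_assoc]
        exact Finset.sum_comm

variable {σ : List (Q × A) → Q → A → ℝ} {d0 : Q → ℝ}

theorem summable_mass_compl_ECUnion (hσ : IsStrategy σ) (hd0 : IsDist d0) :
    Summable fun i => mass (M.stepDist σ d0 i) M.ECUnionᶜ := by
  obtain ⟨U, hUpos, hU1, hU⟩ := M.exists_potential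
  obtain ⟨c, hc, hcU⟩ := exists_pos_forall_le_of_pos U
  have hD (i : ℕ) := M.isDist_stepDist hσ hd0 i
  have hmass (i : ℕ) : c * mass (M.stepDist σ d0 i) M.ECUnionᶜ ≤
      M.stepDist σ d0 (i + 1) ⬝ᵥ U - M.stepDist σ d0 i ⬝ᵥ U := by
    obtain ⟨s, hs, hstep⟩ := M.exists_stepDist_succ_eq_vecMul hσ hd0 i
    have hgrow := dotProduct_le_dotProduct_of_nonneg_left
      (M.le_transitionMatrix_mulVec hs (V := U + M.ECUnionᶜ.indicator U) hU) (hD i).1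
    have hind := mul_mass_le_dotProduct_indicator (S := M.ECUnionᶜ) (hD i).1
      fun q => hcU q (hUpos q)
    rw [dotProduct_add] at hgrow
    rw [hstep, ← Matrix.dotProduct_mulVec]
    linarith
  refine summable_of_sum_range_le (c := 1 / c)
    (fun i => Finset.sum_nonneg fun q _ => Set.indicator_nonneg (fun q _ => (hD i).1 q) q)
    fun n => ?_
  rw [le_div_iff₀' hc, Finset.mul_sum]
  calc ∑ i ∈ Finset.range n, c * mass (M.stepDist σ d0 i) M.ECUnionᶜ
      ≤ M.stepDist σ d0 n ⬝ᵥ U - M.stepDist σ d0 0 ⬝ᵥ U := by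
        rw [← Finset.sum_range_sub fun i => M.stepDist σ d0 i ⬝ᵥ U]
        exact Finset.sum_le_sum fun i _ => hmass i
    _ ≤ M.stepDist σ d0 n ⬝ᵥ U :=
        sub_le_self _ (dotProduct_nonneg_of_nonneg (hD 0).1 fun q => (hUpos q).le)
    _ ≤ M.stepDist σ d0 n ⬝ᵥ 1 := dotProduct_le_dotProduct_of_nonneg_left hU1 (hD n).1
    _ = 1 := by rw [dotProduct_one, (hD n).2]

lemma eventually_mass_ECUnion_inter_pos (hσ : IsStrategy σ) (hd0 : IsDist d0) {T : Set Q} {ε : ℝ}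
    (hε : 0 < ε) (hT : ∀ i, ε < mass (M.stepDist σ d0 i) T) :
    ∀ᶠ i in atTop, 0 < mass (M.stepDist σ d0 i) (M.ECUnion ∩ T) := by
  have hlim := (M.summable_mass_compl_ECUnion hσ hd0).tendsto_atTop_zero
  filter_upwards [hlim.eventually_lt_const hε] with i hi
  linarith [hT i, mass_le_mass_inter_add_mass_compl (S := T) (M.stepDist_nonneg hσ hd0 i) M.ECUnion]

end Transience

section Necessity

variable {Q A : Type} [Fintype Q] [Fintype A] [Nonempty A] {M : MDP Q A} {d0 : Q → ℝ} {T : Set Q}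

lemma mass_stepDist_uniformStrategy_pos {σ : List (Q × A) → Q → A → ℝ} (hσ : IsStrategy σ)
    (hd0 : IsDist d0) {i : ℕ} (h : 0 < mass (M.stepDist σ d0 i) T) :
    0 < mass (M.stepDist (uniformStrategy Q A) d0 i) T := by
  rw [mass_pos_iff (M.stepDist_nonneg hσ hd0 i)] at h
  rw [mass_pos_iff (M.stepDist_nonneg isStrategy_uniformStrategy hd0 i)]
  exact h.mono (Set.inter_subset_inter_left _ (M.supp_stepDist_subset_uniformStrategy hσ hd0 i))

theorem BndAlways.mass_uniformStrategy_ECUnion_inter_pos (h : M.BndAlways d0 T) (hd0 : IsDist d0)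
    {i : ℕ} (hi : 2 ^ Fintype.card Q ≤ i) :
    0 < mass (M.stepDist (uniformStrategy Q A) d0 i) (M.ECUnion ∩ T) := by
  obtain ⟨σ, hσ, ε, hε, hT⟩ := h
  obtain ⟨N, hN⟩ := eventually_atTop.1 (M.eventually_mass_ECUnion_inter_pos hσ hd0 hε hT)
  have hlate : N ≤ i + N * idempotentExponent Q :=
    (Nat.le_mul_of_pos_right N idempotentExponent_pos).trans (Nat.le_add_left _ _)
  have hpos := mass_stepDist_uniformStrategy_pos hσ hd0 (hN _ hlate)
  have hnonneg (j : ℕ) := M.stepDist_nonneg isStrategy_uniformStrategy hd0 j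
  rwa [mass_pos_iff (hnonneg _), M.supp_stepDist_uniformStrategy_add_mul_idempotentExponent hd0 hi,
    ← mass_pos_iff (hnonneg _)] at hpos

end Necessity

section Stay

lemma uniformOn_pos_iff {α : Type} [Finite α] {S : Set α} {x : α} : 0 < uniformOn S x ↔ x ∈ S := by
  by_cases hx : x ∈ S
  · have hcard : 0 < S.ncard := (Set.ncard_pos S.toFinite).2 ⟨x, hx⟩
    simp [uniformOn, hx, hcard]
  · simp [uniformOn, hx]

lemma isDist_uniformOn {α : Type} [Fintype α] {S : Set α} (hS : S.Nonempty) :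
    IsDist (uniformOn S) := by
  have hcard : (S.ncard : ℝ) ≠ 0 := Nat.cast_ne_zero.2 (Set.ncard_pos S.toFinite |>.2 hS).ne'
  refine ⟨fun x => ite_nonneg (by positivity) le_rfl, ?_⟩
  simp only [uniformOn, ← Finset.sum_filter, Set.filter_mem_univ_eq_toFinset, Finset.sum_const,
    ← Set.ncard_eq_toFinset_card', nsmul_eq_mul, mul_one_div_cancel hcard]

variable {Q A : Type} [Fintype Q] [Fintype A]

/-- The actions played in `q` once the strategy settles in the end-components: those that stay
inside some end-component containing `q`, and all actions if there is none. -/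
def stayActions (M : MDP Q A) (q : Q) : Set A :=
  {a | q ∈ M.ECUnion → ∃ S, M.IsEC S ∧ q ∈ S ∧ M.Allowed S q a}

/-- The memoryless decision rule that plays `stayActions` uniformly at random. -/
noncomputable def stayRule (M : MDP Q A) (q : Q) : A → ℝ := uniformOn (M.stayActions q)

/-- The transition matrix of the Markov chain on the states induced by `stayRule`. -/
noncomputable def stayMatrix (M : MDP Q A) : Matrix Q Q ℝ := M.transitionMatrix M.stayRule

variable [Nonempty A] (M : MDP Q A)

lemma isDist_stayRule (q : Q) : IsDist (M.stayRule q) := by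
  refine isDist_uniformOn ?_
  by_cases hq : q ∈ M.ECUnion
  · obtain ⟨S, hS, hqS⟩ := hq
    obtain ⟨a, ha⟩ := hS.1 q hqS
    exact ⟨a, fun _ => ⟨S, hS, hqS, ha⟩⟩
  · exact ⟨Classical.arbitrary A, fun h => absurd h hq⟩

lemma stayMatrix_mem_rowStochastic : M.stayMatrix ∈ Matrix.rowStochastic ℝ Q :=
  M.transitionMatrix_mem_rowStochastic M.isDist_stayRule

variable {M}

lemma stayMatrix_apply_pos_iff {q q' : Q} :
    0 < M.stayMatrix q q' ↔ ∃ a ∈ M.stayActions q, 0 < M.δ q a q' := by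
  simp only [stayMatrix, M.transitionMatrix_apply_pos_iff M.isDist_stayRule, stayRule,
    uniformOn_pos_iff]

lemma IsEC.exists_stayMatrix_pow_apply_pos {S : Set Q} (hS : M.IsEC S) {q q' : Q} (hq : q ∈ S)
    (hq' : q' ∈ S) : ∃ k, 0 < (M.stayMatrix ^ k) q q' := by
  induction hS.2 q hq q' hq' with
  | refl => exact ⟨0, by simp⟩
  | tail _ hedge ih =>
    obtain ⟨hx, -, a, ha, hδ⟩ := hedge
    obtain ⟨k, hk⟩ := ih hx
    exact ⟨k + 1, pow_add_apply_pos M.stayMatrix_mem_rowStochastic hk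
      (by simpa using stayMatrix_apply_pos_iff.2 ⟨a, fun _ => ⟨S, hS, hx, ha⟩, hδ⟩)⟩

lemma mem_ECUnion_and_exists_return {q x : Q} (hq : q ∈ M.ECUnion) {k : ℕ}
    (hx : 0 < (M.stayMatrix ^ k) q x) : x ∈ M.ECUnion ∧ ∃ l, 0 < (M.stayMatrix ^ l) x q := by
  have hK := M.stayMatrix_mem_rowStochastic
  induction k generalizing x with
  | zero =>
    obtain rfl : q = x := by
      by_contra h
      simp [h] at hx
    exact ⟨hq, 0, by simp⟩
  | succ k ih =>
    obtain ⟨y, hqy, hyx⟩ := exists_pos_of_pow_add_apply_pos hK hx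
    obtain ⟨hy, l, hyq⟩ := ih hqy
    rw [pow_one] at hyx
    obtain ⟨a, ha, hδ⟩ := stayMatrix_apply_pos_iff.1 hyx
    obtain ⟨S, hS, hyS, haS⟩ := ha hy
    obtain ⟨j, hxy⟩ := hS.exists_stayMatrix_pow_apply_pos (haS x hδ) hyS
    exact ⟨⟨S, hS, haS x hδ⟩, j + l, pow_add_apply_pos hK hxy hyq⟩

lemma isRecurrent_stayMatrix {q : Q} (hq : q ∈ M.ECUnion) : IsRecurrent M.stayMatrix q :=
  fun _ _ h => (mem_ECUnion_and_exists_return hq h).2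

end Stay

section UniformThenStay

variable {Q A : Type} [Fintype Q] [Fintype A]

/-- The strategy that plays uniformly at random for `N` steps and settles in the end-components
from then on. -/
noncomputable def uniformThenStay (M : MDP Q A) (N : ℕ) : List (Q × A) → Q → A → ℝ :=
  fun h => if h.length < N then uniformStrategy Q A h else M.stayRule

variable (M : MDP Q A) {d0 : Q → ℝ} {T : Set Q}

lemma stepDist_uniformThenStay_of_le (d0 : Q → ℝ) {i N : ℕ} (hi : i ≤ N) :
    M.stepDist (M.uniformThenStay N) d0 i = M.stepDist (uniformStrategy Q A) d0 i :=
  M.stepDist_congr fun _ hl => if_pos (hl.trans_le hi)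

lemma stepDist_uniformThenStay_add (d0 : Q → ℝ) (N k : ℕ) :
    M.stepDist (M.uniformThenStay N) d0 (N + k) =
      M.stepDist (uniformStrategy Q A) d0 N ᵥ* M.stayMatrix ^ k := by
  rw [← M.stepDist_uniformThenStay_of_le d0 le_rfl]
  exact M.stepDist_markov_add
    (s := fun i => if i < N then fun _ _ => 1 / (Fintype.card A : ℝ) else M.stayRule)
    (fun _ hi => if_neg hi.not_gt) d0 k

variable [Nonempty A]

lemma isStrategy_uniformThenStay (N : ℕ) : IsStrategy (M.uniformThenStay N) := by
  have hdist (h : List (Q × A)) (q : Q) : IsDist (M.uniformThenStay N h q) := by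
    unfold uniformThenStay
    split_ifs
    · exact isDist_const_one_div_card
    · exact M.isDist_stayRule q
  exact ⟨fun h q => (hdist h q).1, fun h q => (hdist h q).2⟩

lemma stepDist_uniformStrategy_add_apply_pos (hd0 : IsDist d0) {i k : ℕ} {q x : Q}
    (hq : 0 < M.stepDist (uniformStrategy Q A) d0 i q) (hx : 0 < (M.stayMatrix ^ k) q x) :
    0 < M.stepDist (uniformStrategy Q A) d0 (i + k) x := by
  refine M.supp_stepDist_subset_uniformStrategy (M.isStrategy_uniformThenStay i) hd0 (i + k) ?_
  rw [stepDist_uniformThenStay_add]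
  exact (mul_pos hq hx).trans_le (apply_mul_apply_le_vecMul
    (M.stepDist_nonneg isStrategy_uniformStrategy hd0 i)
    (pow_mem M.stayMatrix_mem_rowStochastic k).1 q x)

variable {M} {B : ℕ}

-- Go back a multiple of `idempotentExponent Q` steps from time `B + idempotentExponent Q + k`, into
-- the uniform phase, to a state of `ECUnion ∩ T`, and follow a loop of the stay chain around it.
lemma exists_recurrent_pow_stayMatrix_pos (hd0 : IsDist d0)
    (hE : ∀ i ≥ B, 0 < mass (M.stepDist (uniformStrategy Q A) d0 i) (M.ECUnion ∩ T)) (k : ℕ) :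
    ∃ x, 0 < M.stepDist (uniformStrategy Q A) d0 (B + idempotentExponent Q) x ∧
      IsRecurrent M.stayMatrix x ∧ ∃ q ∈ T, 0 < (M.stayMatrix ^ k) x q := by
  have hK := M.stayMatrix_mem_rowStochastic
  set R := idempotentExponent Q
  have hmod : k % R < R := Nat.mod_lt k idempotentExponent_pos
  have hdiv := Nat.mod_add_div' k R
  obtain ⟨q, hq, hqE, hqT⟩ := (mass_pos_iff
    (M.stepDist_nonneg isStrategy_uniformStrategy hd0 _)).1 (hE (B + k % R) (Nat.le_add_right _ _))
  have hloop := pow_mul_apply_self_pos hK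
    ((isRecurrent_stayMatrix hqE).pow_idempotentExponent_apply_self_pos hK) (k / R + 1)
  rw [show (k / R + 1) * R = (R - k % R) + k by rw [Nat.succ_mul]; omega] at hloop
  obtain ⟨x, hqx, hxq⟩ := exists_pos_of_pow_add_apply_pos hK hloop
  refine ⟨x, ?_, isRecurrent_stayMatrix (mem_ECUnion_and_exists_return hqE hqx).1, q, hqT, hxq⟩
  have hx := M.stepDist_uniformStrategy_add_apply_pos hd0 hq hqx
  rwa [show B + k % R + (R - k % R) = B + R by omega] at hx

lemma exists_pos_le_mass_uniformThenStay_add (hd0 : IsDist d0)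
    (hE : ∀ i ≥ B, 0 < mass (M.stepDist (uniformStrategy Q A) d0 i) (M.ECUnion ∩ T)) :
    ∃ N, ∃ c > 0, ∀ k, c ≤ mass (M.stepDist (M.uniformThenStay N) d0 (N + k)) T := by
  have hK := M.stayMatrix_mem_rowStochastic
  set N := B + idempotentExponent Q
  obtain ⟨c, hc, hcK⟩ := exists_pos_le_pow_apply_of_isRecurrent hK
  obtain ⟨c', hc', hcD⟩ := exists_pos_forall_le_of_pos (M.stepDist (uniformStrategy Q A) d0 N)
  refine ⟨N, c' * c, mul_pos hc' hc, fun k => ?_⟩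
  obtain ⟨x, hx, hrec, q, hq, hxq⟩ := exists_recurrent_pow_stayMatrix_pos hd0 hE k
  calc c' * c ≤ M.stepDist (uniformStrategy Q A) d0 N x * (M.stayMatrix ^ k) x q :=
        mul_le_mul (hcD x hx) (hcK x hrec k q hxq) hc.le hx.le
    _ ≤ M.stepDist (M.uniformThenStay N) d0 (N + k) q := by
        rw [stepDist_uniformThenStay_add]
        exact apply_mul_apply_le_vecMul (M.stepDist_nonneg isStrategy_uniformStrategy hd0 N)
          (pow_mem hK k).1 x q
    _ ≤ mass (M.stepDist (M.uniformThenStay N) d0 (N + k)) T :=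
        le_mass (M.stepDist_nonneg (M.isStrategy_uniformThenStay N) hd0 _) hq

theorem bndAlways_of_mass_uniformStrategy_pos (hd0 : IsDist d0)
    (hT : ∀ i, 0 < mass (M.stepDist (uniformStrategy Q A) d0 i) T)
    (hE : ∀ i ≥ B, 0 < mass (M.stepDist (uniformStrategy Q A) d0 i) (M.ECUnion ∩ T)) :
    M.BndAlways d0 T := by
  obtain ⟨N, c, hc, hlate⟩ := exists_pos_le_mass_uniformThenStay_add hd0 hE
  obtain ⟨c', hc', hearly⟩ := exists_pos_forall_le_of_pos
    fun i : Fin N => mass (M.stepDist (uniformStrategy Q A) d0 i) T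
  refine ⟨M.uniformThenStay N, M.isStrategy_uniformThenStay N, min c c' / 2, by positivity,
    fun i => (half_lt_self (lt_min hc hc')).trans_le ?_⟩
  rcases lt_or_ge i N with hi | hi
  · rw [M.stepDist_uniformThenStay_of_le d0 hi.le]
    exact (min_le_right c c').trans (hearly ⟨i, hi⟩ (hT i))
  · obtain ⟨k, rfl⟩ := Nat.exists_eq_add_of_le hi
    exact (min_le_left c c').trans (hlate k)

end UniformThenStay

end MDP

open MDP in
/-- `d0` is boundedly always synchronizing in `T` iff the uniform strategy
keeps positive mass in `T` at every step and positive mass in `E ∩ T` at every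
step `i ≥ 2^n`. -/
theorem stmt14 {Q A : Type} [Fintype Q] [Fintype A] [Nonempty A] (M : MDP Q A)
    (d0 : Q → ℝ) (hd0 : IsDist d0) (T : Set Q) :
    M.BndAlways d0 T ↔
      ((∀ i : ℕ, 0 < mass (M.stepDist (uniformStrategy Q A) d0 i) T) ∧
        ∀ i ≥ 2 ^ Fintype.card Q,
          0 < mass (M.stepDist (uniformStrategy Q A) d0 i) (M.ECUnion ∩ T)) := by
  refine ⟨fun h => ⟨fun i => ?_, fun i hi => ?_⟩, fun ⟨hT, hE⟩ => ?_⟩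
  · obtain ⟨σ, hσ, ε, hε, hpos⟩ := h
    exact mass_stepDist_uniformStrategy_pos hσ hd0 (hε.trans (hpos i))
  · exact h.mass_uniformStrategy_ECUnion_inter_pos hd0 hi
  · exact bndAlways_of_mass_uniformStrategy_pos hd0 hT hE
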